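/- Let F be a division ring, (A, v) a controllable pair with A ∈ F^{n×n}, (u, B) an observable pair with B ∈ F^{k×k}, b ∈ F^{n×1}, d ∈ F^{1×k}. Let p be the monic polynomial with {g : (vg)^ℓ(A) = 0} = p·F[z]. Then: (1) there exists f ∈ F[z] with deg f < n + k, (vf)^ℓ(A) = b and (fu)^r(B) = d if and only if the Sylvester equation AY − YB = b·u − v·d has a solution Y ∈ F^{n×k}; (2) for every such Y, the polynomial f_Y(z) := Σ_{m=0}^{n−1} z^m c_m + p(z)·(Σ_{m=0}^{k−1} y_m z^m), where (c_0, …, c_{n−1})^T := 𝔠_{A,v}^{−1} b and (y_0, …, y_{k−1}) := e_n^T·𝔠_{A,v}^{−1}·Y·𝔬_{u,B}^{−1}, satisfies deg f_Y < n + k, (v f_Y)^ℓ(A) = b and (f_Y u)^r(B) = d; (3) the map Y ↦ f_Y is a bijection from the set of solutions Y of AY − YB = bu − vd onto the set of polynomials f of degree < n + k satisfying (vf)^ℓ(A) = b and (fu)^r(B) = d. -/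

import Mathlib

/-!
Write `β = 𝔠⁻¹ b`, `r = ∑ zᵐ βₘ`, and expand `Y = ∑ i < n, Aⁱ v Wᵢ` with `W = 𝔠⁻¹ Y`.
Since `p` is monic of degree `n` (`natDegree_generator`) and annihilates `(A, v)`, the matrix `A`
acts on the columns `Aⁱ v` as the companion matrix of `p`. Comparing coefficients of `Aⁱ v`, the
equation `AY - YB = bu - vd` becomes the row recursion (`sylvester_iff`)
`Wᵢ₋₁ = Wᵢ B + pᵢ Wₙ₋₁ + βᵢ u` for `0 ≤ i < n`, with `W₋₁ = d`.
Hence the last row `y = Wₙ₋₁` determines all of `Y` by Horner's rule (`horner`), and it is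
admissible iff the recursion ends in `d`.

By observability, rows `y` correspond bijectively to polynomials `q` of degree `< k` through
`y = (q u)ʳ(B)`. Multiplicativity of right evaluation (`rightEval_mul`) shows that the recursion
started from `y` ends in `((r + p q) u)ʳ(B)` (`rightEval_add_mul`). So solutions `Y` correspond to
those `q` of degree `< k` for which `f = r + p q` satisfies the right condition. These `f` are
exactly the solutions of the interpolation problem: the left condition says `f - r ∈ p F[z]`, and
`deg f < n + k` bounds the degree of the quotient. The entries of `y 𝔬⁻¹` are the coefficients
of `q`, so the correspondence is `Y ↦ f_Y`.
-/


open Polynomial Matrix Finset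

section Defs

variable {F : Type*} [DivisionRing F]

/-- The scalar `c` regarded as a `1 × 1` matrix. -/
noncomputable def oneByOne (c : F) : Matrix (Fin 1) (Fin 1) F := Matrix.of fun _ _ => c

/-- Left evaluation `(v f)^{𝔢ℓ}(A) := ∑ⱼ Aʲ v fⱼ` of `f ∈ F[z]` at an input pair `(A, v)`. -/
noncomputable def leftEval {m : Type*} [Fintype m] [DecidableEq m]
    (A : Matrix m m F) (v : Matrix m (Fin 1) F) (f : F[X]) : Matrix m (Fin 1) F :=
  ∑ j ∈ Finset.range (f.natDegree + 1), A ^ j * v * oneByOne (f.coeff j)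

/-- Right evaluation `(f u)^{𝔢r}(A) := ∑ⱼ fⱼ u Aʲ` of `f ∈ F[z]` at an output pair `(u, A)`. -/
noncomputable def rightEval {m : Type*} [Fintype m] [DecidableEq m]
    (u : Matrix (Fin 1) m F) (A : Matrix m m F) (f : F[X]) : Matrix (Fin 1) m F :=
  ∑ j ∈ Finset.range (f.natDegree + 1), oneByOne (f.coeff j) * u * A ^ j

/-- Controllability matrix `[v, Av, …, A^{n-1} v]`. -/
noncomputable def ctrbMat {n : ℕ} (A : Matrix (Fin n) (Fin n) F)
    (v : Matrix (Fin n) (Fin 1) F) : Matrix (Fin n) (Fin n) F :=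
  Matrix.of fun i j => (A ^ (j : ℕ) * v) i 0

/-- Observability matrix with rows `u, uA, …, u A^{n-1}`. -/
noncomputable def obsMat {n : ℕ} (u : Matrix (Fin 1) (Fin n) F)
    (A : Matrix (Fin n) (Fin n) F) : Matrix (Fin n) (Fin n) F :=
  Matrix.of fun i j => (u * A ^ (i : ℕ)) 0 j

/-- Left companion matrix of a (monic, degree `n`) polynomial: its columns are
`e₂, …, eₙ, -(p₀, …, p_{n-1})ᵀ`. -/
noncomputable def Cl (n : ℕ) (p : F[X]) : Matrix (Fin n) (Fin n) F :=
  Matrix.of fun i j =>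
    if (j : ℕ) = n - 1 then -(p.coeff (i : ℕ)) else if (i : ℕ) = (j : ℕ) + 1 then 1 else 0

/-- Right companion matrix: the transpose of the left one. -/
noncomputable def Cr (n : ℕ) (p : F[X]) : Matrix (Fin n) (Fin n) F := (Cl n p)ᵀ

/-- First standard basis column vector of `F^{n×1}`. -/
noncomputable def e1 (F : Type*) [DivisionRing F] (n : ℕ) : Matrix (Fin n) (Fin 1) F :=
  Matrix.of fun i _ => if (i : ℕ) = 0 then 1 else 0

/-- First standard basis row vector of `F^{1×n}`. -/
noncomputable def e1row (F : Type*) [DivisionRing F] (n : ℕ) : Matrix (Fin 1) (Fin n) F :=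
  Matrix.of fun _ j => if (j : ℕ) = 0 then 1 else 0

/-- Two-sided evaluation `(v f u)^{𝔢ts}(A,B) := ∑_{i+j+1 ≤ deg f} Aⁱ v f_{i+j+1} u Bʲ`. -/
noncomputable def tsEval {n k : ℕ} (A : Matrix (Fin n) (Fin n) F) (B : Matrix (Fin k) (Fin k) F)
    (v : Matrix (Fin n) (Fin 1) F) (u : Matrix (Fin 1) (Fin k) F) (f : F[X]) :
    Matrix (Fin n) (Fin k) F :=
  ∑ i ∈ Finset.range f.natDegree, ∑ j ∈ Finset.range f.natDegree,
    A ^ i * v * oneByOne (f.coeff (i + j + 1)) * u * B ^ j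

end Defs

section Aux

variable {F : Type*} [DivisionRing F]

/-! ### Left and right evaluation -/

lemma oneByOne_zero : oneByOne (0 : F) = 0 := by ext; simp [oneByOne]

lemma oneByOne_add (a b : F) : oneByOne (a + b) = oneByOne a + oneByOne b := by
  ext; simp [oneByOne]

lemma oneByOne_mul (a b : F) : oneByOne (a * b) = oneByOne a * oneByOne b := by
  ext; simp [oneByOne, Matrix.mul_apply]

lemma oneByOne_one : oneByOne (1 : F) = 1 := by
  ext i j; fin_cases i; fin_cases j; simp [oneByOne]

lemma leftEval_eq_range {n : ℕ} (A : Matrix (Fin n) (Fin n) F) (v : Matrix (Fin n) (Fin 1) F)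
    (f : F[X]) (N : ℕ) (hN : ∀ j, N ≤ j → f.coeff j = 0) :
    leftEval A v f = ∑ j ∈ Finset.range N, A ^ j * v * oneByOne (f.coeff j) := by
  have h0 : ∀ j, A ^ j * v * oneByOne (0 : F) = 0 := fun j => by simp [oneByOne_zero]
  rw [leftEval, ← Polynomial.sum_over_range f (f := fun j a => A ^ j * v * oneByOne a) h0]
  refine Polynomial.sum_eq_of_subset _ h0 fun j hj => ?_
  by_contra h
  exact (Polynomial.mem_support_iff.1 hj) (hN j (by simpa using h))

lemma rightEval_eq_range {k : ℕ} (u : Matrix (Fin 1) (Fin k) F) (B : Matrix (Fin k) (Fin k) F)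
    (f : F[X]) (N : ℕ) (hN : ∀ j, N ≤ j → f.coeff j = 0) :
    rightEval u B f = ∑ j ∈ Finset.range N, oneByOne (f.coeff j) * u * B ^ j := by
  have h0 : ∀ j, oneByOne (0 : F) * u * B ^ j = 0 := fun j => by simp [oneByOne_zero]
  rw [rightEval, ← Polynomial.sum_over_range f (f := fun j a => oneByOne a * u * B ^ j) h0]
  refine Polynomial.sum_eq_of_subset _ h0 fun j hj => ?_
  by_contra h
  exact (Polynomial.mem_support_iff.1 hj) (hN j (by simpa using h))

lemma leftEval_add {n : ℕ} (A : Matrix (Fin n) (Fin n) F) (v : Matrix (Fin n) (Fin 1) F)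
    (f g : F[X]) : leftEval A v (f + g) = leftEval A v f + leftEval A v g := by
  have hb : ∀ j, max (f.natDegree + 1) (g.natDegree + 1) ≤ j → f.coeff j = 0 ∧ g.coeff j = 0 :=
    fun j hj => ⟨coeff_eq_zero_of_natDegree_lt (by omega),
      coeff_eq_zero_of_natDegree_lt (by omega)⟩
  rw [leftEval_eq_range A v f _ fun j hj => (hb j hj).1,
    leftEval_eq_range A v g _ fun j hj => (hb j hj).2,
    leftEval_eq_range A v (f + g) _ fun j hj => by rw [coeff_add, (hb j hj).1, (hb j hj).2, add_zero],
    ← Finset.sum_add_distrib]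
  simp only [coeff_add, oneByOne_add, Matrix.mul_add]

lemma rightEval_add {k : ℕ} (u : Matrix (Fin 1) (Fin k) F) (B : Matrix (Fin k) (Fin k) F)
    (f g : F[X]) : rightEval u B (f + g) = rightEval u B f + rightEval u B g := by
  have hb : ∀ j, max (f.natDegree + 1) (g.natDegree + 1) ≤ j → f.coeff j = 0 ∧ g.coeff j = 0 :=
    fun j hj => ⟨coeff_eq_zero_of_natDegree_lt (by omega),
      coeff_eq_zero_of_natDegree_lt (by omega)⟩
  rw [rightEval_eq_range u B f _ fun j hj => (hb j hj).1,
    rightEval_eq_range u B g _ fun j hj => (hb j hj).2,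
    rightEval_eq_range u B (f + g) _ fun j hj => by
      rw [coeff_add, (hb j hj).1, (hb j hj).2, add_zero],
    ← Finset.sum_add_distrib]
  simp only [coeff_add, oneByOne_add, Matrix.add_mul]

lemma rightEval_monomial {k : ℕ} (u : Matrix (Fin 1) (Fin k) F) (B : Matrix (Fin k) (Fin k) F)
    (i : ℕ) (a : F) : rightEval u B (monomial i a) = oneByOne a * u * B ^ i := by
  rw [rightEval_eq_range u B _ (i + 1) fun j hj => by rw [coeff_monomial, if_neg (by omega)],
    Finset.sum_eq_single_of_mem i (by simp)]
  · simp
  · intro j _ hj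
    rw [coeff_monomial, if_neg (Ne.symm hj), oneByOne_zero]; simp

lemma rightEval_add_row {k : ℕ} (u w : Matrix (Fin 1) (Fin k) F) (B : Matrix (Fin k) (Fin k) F)
    (f : F[X]) : rightEval (u + w) B f = rightEval u B f + rightEval w B f := by
  simp only [rightEval, Matrix.mul_add, Matrix.add_mul, Finset.sum_add_distrib]

/-- Right evaluation is compatible with multiplication: the value of `f * g` at `(u, B)` is the
value of `f` at the output pair whose row is the value of `g`. This survives noncommutativity
because the indeterminate is central and coefficients act from the left. -/
lemma rightEval_mul {k : ℕ} (u : Matrix (Fin 1) (Fin k) F) (B : Matrix (Fin k) (Fin k) F)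
    (f g : F[X]) : rightEval u B (f * g) = rightEval (rightEval u B g) B f := by
  induction f using Polynomial.induction_on' with
  | add f₁ f₂ h₁ h₂ => rw [add_mul, rightEval_add, rightEval_add, h₁, h₂]
  | monomial i a =>
    induction g using Polynomial.induction_on' with
    | add g₁ g₂ h₁ h₂ => rw [mul_add, rightEval_add, rightEval_add, h₁, h₂, rightEval_add_row]
    | monomial j c =>
      rw [monomial_mul_monomial]
      simp only [rightEval_monomial, oneByOne_mul, Matrix.mul_assoc]
      rw [add_comm, pow_add]

/-! ### Coefficients, controllability and observability matrices -/

lemma coeff_sum_X_pow_mul_C {n : ℕ} (c : Fin n → F) (i : ℕ) :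
    (∑ m : Fin n, (X : F[X]) ^ (m : ℕ) * C (c m)).coeff i =
      if h : i < n then c ⟨i, h⟩ else 0 := by
  simp only [finsetSum_coeff, X_pow_mul_C, coeff_C_mul, coeff_X_pow]
  split_ifs with h
  · rw [Finset.sum_eq_single_of_mem ⟨i, h⟩ (Finset.mem_univ _)]
    · simp
    · intro m _ hm
      rw [if_neg (fun e => hm (Fin.ext e.symm)), mul_zero]
  · exact Finset.sum_eq_zero fun m _ => by rw [if_neg (by omega), mul_zero]

/-- `∑ i < n, Aⁱ v Uᵢ` is the controllability matrix times the matrix with rows `Uᵢ`. -/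
lemma sum_range_pow_mul {n k : ℕ} (A : Matrix (Fin n) (Fin n) F) (v : Matrix (Fin n) (Fin 1) F)
    (U : ℕ → Matrix (Fin 1) (Fin k) F) :
    ∑ i ∈ Finset.range n, A ^ i * v * U i = ctrbMat A v * Matrix.of fun (i : Fin n) j => U i 0 j := by
  rw [Finset.sum_range]
  ext a j
  simp [Matrix.sum_apply, Matrix.mul_apply, ctrbMat]

/-- `∑ i < k, cᵢ u Bⁱ` is the row of the `cᵢ` times the observability matrix. -/
lemma sum_range_mul_pow {k : ℕ} (u : Matrix (Fin 1) (Fin k) F) (B : Matrix (Fin k) (Fin k) F)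
    (c : ℕ → F) :
    ∑ i ∈ Finset.range k, oneByOne (c i) * u * B ^ i =
      (Matrix.of fun (_ : Fin 1) (i : Fin k) => c i) * obsMat u B := by
  rw [Finset.sum_range]
  ext a j
  simp only [Matrix.sum_apply, Matrix.mul_assoc]
  rw [Matrix.mul_apply]
  refine Finset.sum_congr rfl fun i _ => ?_
  rw [Matrix.mul_apply, Fin.sum_univ_one]
  rfl

/-- The monic generator of the annihilator of a controllable pair of size `n` has degree `n`: no
nonzero polynomial of smaller degree annihilates, while expanding `Aⁿ v` in the columns of the
controllability matrix gives an annihilator of degree `n`. -/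
lemma natDegree_generator {n : ℕ} (A : Matrix (Fin n) (Fin n) F) (v : Matrix (Fin n) (Fin 1) F)
    (C' : Matrix (Fin n) (Fin n) F)
    (hc : ctrbMat A v * C' = 1) (hc' : C' * ctrbMat A v = 1)
    (p : F[X]) (hp : p.Monic)
    (hpI : ∀ g : F[X], leftEval A v g = 0 ↔ ∃ h : F[X], g = p * h) : p.natDegree = n := by
  have hL : leftEval A v p = 0 := (hpI p).2 ⟨1, by simp⟩
  apply le_antisymm
  · set s : F[X] := ∑ m : Fin n, (X : F[X]) ^ (m : ℕ) * C (-(C' * (A ^ n * v)) m 0) with hs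
    have hsc : ∀ i, s.coeff i = if h : i < n then -(C' * (A ^ n * v)) ⟨i, h⟩ 0 else 0 := fun i => by
      rw [hs, coeff_sum_X_pow_mul_C (fun m => -(C' * (A ^ n * v)) m 0)]
    have hsd : s.degree < (n : WithBot ℕ) := by
      rw [degree_lt_iff_coeff_zero]
      intro i hi
      rw [hsc, dif_neg (by omega)]
    have hq : leftEval A v (X ^ n + s) = 0 := by
      rw [leftEval_eq_range A v _ (n + 1) fun j hj => by
        rw [coeff_add, hsc, dif_neg (by omega), coeff_X_pow, if_neg (by omega), add_zero],
        Finset.sum_range_succ]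
      have h1 : ∑ j ∈ Finset.range n, A ^ j * v * oneByOne ((X ^ n + s).coeff j) =
          ∑ j ∈ Finset.range n, A ^ j * v * oneByOne (s.coeff j) :=
        Finset.sum_congr rfl fun j hj => by
          rw [coeff_add, coeff_X_pow, if_neg (by have := Finset.mem_range.1 hj; omega), zero_add]
      have h2 : (Matrix.of fun (i : Fin n) j => oneByOne (s.coeff i) 0 j) = -(C' * (A ^ n * v)) := by
        ext i j
        fin_cases j
        simp [oneByOne, hsc]
      rw [h1, sum_range_pow_mul A v fun j => oneByOne (s.coeff j), h2, Matrix.mul_neg,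
        ← Matrix.mul_assoc, hc, coeff_add, hsc, dif_neg (by omega), coeff_X_pow, if_pos rfl,
        add_zero, oneByOne_one]
      simp
    obtain ⟨h, hh⟩ := (hpI _).1 hq
    have hm : (X ^ n + s).Monic := monic_X_pow_add hsd
    have hd : (X ^ n + s).natDegree = n := by
      rw [natDegree_add_eq_left_of_degree_lt (by simpa using hsd), natDegree_X_pow]
    rw [← hd, hh]
    refine (natDegree_le_of_dvd ⟨h, rfl⟩ ?_)
    rw [← hh]; exact hm.ne_zero
  · by_contra hlt
    push Not at hlt
    rw [leftEval_eq_range A v p n fun j hj => coeff_eq_zero_of_natDegree_lt (by omega),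
      sum_range_pow_mul A v fun j => oneByOne (p.coeff j)] at hL
    have h3 := congrArg (fun M => C' * M) hL
    simp only [← Matrix.mul_assoc, hc', Matrix.one_mul, Matrix.mul_zero] at h3
    have h4 := congrFun (congrFun h3 ⟨p.natDegree, hlt⟩) 0
    simp [oneByOne, hp.coeff_natDegree] at h4

/-! ### The Sylvester equation as a row recursion -/

/-- Writing `Y = ∑ i < n, Aⁱ v Uᵢ₊₁` and `U₀ = d`, the Sylvester equation is equivalent to the
row recursion given by the companion form of `A`; here `β = 𝔠⁻¹ b`. -/
lemma sylvester_iff {n k : ℕ}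
    (A : Matrix (Fin n) (Fin n) F) (v : Matrix (Fin n) (Fin 1) F)
    (B : Matrix (Fin k) (Fin k) F) (u : Matrix (Fin 1) (Fin k) F)
    (b : Matrix (Fin n) (Fin 1) F) (d : Matrix (Fin 1) (Fin k) F)
    (C' : Matrix (Fin n) (Fin n) F) (hc' : C' * ctrbMat A v = 1)
    (p : F[X]) (hp : p.Monic) (hpn : p.natDegree = n) (hL : leftEval A v p = 0)
    (β : ℕ → F) (hβ : ∑ i ∈ Finset.range n, A ^ i * v * oneByOne (β i) = b)
    (U : ℕ → Matrix (Fin 1) (Fin k) F) (hU : U 0 = d) (Y : Matrix (Fin n) (Fin k) F)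
    (hY : Y = ∑ i ∈ Finset.range n, A ^ i * v * U (i + 1)) :
    A * Y - Y * B = b * u - v * d ↔
      ∀ i < n, U i = U (i + 1) * B + (oneByOne (p.coeff i) * U n + oneByOne (β i) * u) := by
  have hAn : A ^ n * v = -∑ i ∈ Finset.range n, A ^ i * v * oneByOne (p.coeff i) := by
    have h1 : p.coeff n = 1 := by rw [← hpn]; exact hp
    rw [leftEval, hpn, Finset.sum_range_succ, h1, oneByOne_one, Matrix.mul_one] at hL
    exact eq_neg_of_add_eq_zero_right hL
  have hAY : A * Y = ∑ i ∈ Finset.range n, A ^ i * v * U i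
      - ∑ i ∈ Finset.range n, A ^ i * v * (oneByOne (p.coeff i) * U n) - v * d := by
    have h1 : A * Y = ∑ i ∈ Finset.range n, A ^ (i + 1) * v * U (i + 1) := by
      rw [hY, Matrix.mul_sum]
      exact Finset.sum_congr rfl fun i _ => by rw [pow_succ']; simp only [Matrix.mul_assoc]
    have h2 := Finset.sum_range_succ' (fun i => A ^ i * v * U i) n
    rw [Finset.sum_range_succ, ← h1, hAn, hU, pow_zero, Matrix.one_mul] at h2
    rw [eq_sub_iff_add_eq, ← h2, Matrix.neg_mul, ← sub_eq_add_neg, Matrix.sum_mul]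
    simp only [Matrix.mul_assoc]
  have hkey : A * Y - Y * B - (b * u - v * d) =
      ∑ i ∈ Finset.range n, A ^ i * v *
        (U i - (U (i + 1) * B + (oneByOne (p.coeff i) * U n + oneByOne (β i) * u))) := by
    rw [hAY, ← hβ, hY]
    simp only [Matrix.mul_sub, Matrix.mul_add, Finset.sum_sub_distrib, Finset.sum_add_distrib,
      Matrix.sum_mul, Matrix.mul_assoc]
    abel
  rw [← sub_eq_zero, hkey]
  constructor
  · intro h i hi
    rw [sum_range_pow_mul A v fun i => U i -
      (U (i + 1) * B + (oneByOne (p.coeff i) * U n + oneByOne (β i) * u))] at h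
    have h3 := congrArg (fun M => C' * M) h
    simp only [← Matrix.mul_assoc, hc', Matrix.one_mul, Matrix.mul_zero] at h3
    rw [← sub_eq_zero]
    ext a j
    fin_cases a
    exact congrFun (congrFun h3 ⟨i, hi⟩) j
  · intro h
    refine Finset.sum_eq_zero fun i hi => ?_
    rw [sub_eq_zero.2 (h i (Finset.mem_range.1 hi)), Matrix.mul_zero]

/-- Horner's rule: solving the recursion `Uᵢ = Uᵢ₊₁ B + Pᵢ` backwards from `Uₙ`. -/
lemma horner {n k : ℕ} (B : Matrix (Fin k) (Fin k) F) (U P : ℕ → Matrix (Fin 1) (Fin k) F)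
    (h : ∀ i < n, U i = U (i + 1) * B + P i) (s j : ℕ) (hs : j + s = n) :
    U j = ∑ t ∈ Finset.range s, P (j + t) * B ^ t + U n * B ^ s := by
  induction s generalizing j with
  | zero => subst hs; simp
  | succ s ih =>
    rw [h j (by omega), ih (j + 1) (by omega), Finset.sum_range_succ', Matrix.add_mul,
      Matrix.sum_mul]
    simp only [pow_succ, pow_zero, Matrix.mul_one, Matrix.mul_assoc, add_zero]
    have : ∀ t, P (j + 1 + t) = P (j + (t + 1)) := fun t => by congr 1; omega
    simp only [this]
    abel

/-- The backward recursion started from `y` ends in `r + p q` evaluated at `(u, B)`, when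
`y` is the value of `q`. -/
lemma rightEval_add_mul {n k : ℕ} (B : Matrix (Fin k) (Fin k) F) (u : Matrix (Fin 1) (Fin k) F)
    (p : F[X]) (hp : p.Monic) (hpn : p.natDegree = n) (r q : F[X])
    (hr : ∀ j, n ≤ j → r.coeff j = 0) (y : Matrix (Fin 1) (Fin k) F) (hy : rightEval u B q = y) :
    rightEval u B (r + p * q) = ∑ t ∈ Finset.range n,
      (oneByOne (p.coeff t) * y + oneByOne (r.coeff t) * u) * B ^ t + y * B ^ n := by
  have h1 : p.coeff n = 1 := by rw [← hpn]; exact hp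
  rw [rightEval_add, rightEval_mul, hy, rightEval_eq_range u B r n hr, rightEval, hpn,
    Finset.sum_range_succ, h1, oneByOne_one]
  simp only [Matrix.add_mul, Finset.sum_add_distrib, Matrix.one_mul]
  abel

end Aux

/-! ### Solutions of the two-sided problem -/

/-- Theorem `T:4.10`: the two-sided problem `(vf)^ℓ(A) = b`,
`(fu)^r(B) = d`, `deg f < n + k`, is solvable iff the Sylvester equation
`AY − YB = b·u − v·d` is solvable, and `Y ↦ f_Y` (with
`f_Y = 𝔄ₙ·𝔠⁻¹b + p·(bottom row of 𝔠⁻¹ Y 𝔬⁻¹)·𝔄_kᵀ`) is a bijection from the solution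
set of the Sylvester equation onto the solution set of the interpolation problem. -/
theorem statement19 {F : Type*} [DivisionRing F] {n k : ℕ} (hn : 1 ≤ n) (hk : 1 ≤ k)
    (A : Matrix (Fin n) (Fin n) F) (v : Matrix (Fin n) (Fin 1) F)
    (B : Matrix (Fin k) (Fin k) F) (u : Matrix (Fin 1) (Fin k) F)
    (b : Matrix (Fin n) (Fin 1) F) (d : Matrix (Fin 1) (Fin k) F)
    (C' : Matrix (Fin n) (Fin n) F)
    (hc : ctrbMat A v * C' = 1) (hc' : C' * ctrbMat A v = 1)
    (O' : Matrix (Fin k) (Fin k) F)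
    (ho : obsMat u B * O' = 1) (ho' : O' * obsMat u B = 1)
    (p : F[X]) (hp : p.Monic)
    (hpI : ∀ g : F[X], leftEval A v g = 0 ↔ ∃ h : F[X], g = p * h)
    (fY : Matrix (Fin n) (Fin k) F → F[X])
    (hfY : ∀ Y : Matrix (Fin n) (Fin k) F,
      fY Y = (∑ m : Fin n, X ^ (m : ℕ) * Polynomial.C ((C' * b) m 0)) +
        p * (∑ m : Fin k,
          Polynomial.C ((C' * Y * O') (⟨n - 1, by omega⟩ : Fin n) m) * X ^ (m : ℕ))) :
    ((∃ f : F[X], f.degree < ((n + k : ℕ) : WithBot ℕ) ∧ leftEval A v f = b ∧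
        rightEval u B f = d) ↔
      (∃ Y : Matrix (Fin n) (Fin k) F, A * Y - Y * B = b * u - v * d)) ∧
    (∀ Y : Matrix (Fin n) (Fin k) F, A * Y - Y * B = b * u - v * d →
      (fY Y).degree < ((n + k : ℕ) : WithBot ℕ) ∧ leftEval A v (fY Y) = b ∧
        rightEval u B (fY Y) = d) ∧
    (∀ Y Y' : Matrix (Fin n) (Fin k) F, A * Y - Y * B = b * u - v * d →
      A * Y' - Y' * B = b * u - v * d → fY Y = fY Y' → Y = Y') ∧
    (∀ f : F[X], f.degree < ((n + k : ℕ) : WithBot ℕ) → leftEval A v f = b →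
      rightEval u B f = d →
      ∃ Y : Matrix (Fin n) (Fin k) F, A * Y - Y * B = b * u - v * d ∧ f = fY Y) := by
  have hL : leftEval A v p = 0 := (hpI p).2 ⟨1, by simp⟩
  have hpn : p.natDegree = n := natDegree_generator A v C' hc hc' p hp hpI
  set r : F[X] := ∑ m : Fin n, X ^ (m : ℕ) * Polynomial.C ((C' * b) m 0) with hr
  have hrc : ∀ i, r.coeff i = if h : i < n then (C' * b) ⟨i, h⟩ 0 else 0 :=
    coeff_sum_X_pow_mul_C fun m => (C' * b) m 0
  have hr0 : ∀ j, n ≤ j → r.coeff j = 0 := fun j hj => by rw [hrc, dif_neg (by omega)]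
  have hβ : ∑ i ∈ Finset.range n, A ^ i * v * oneByOne (r.coeff i) = b := by
    rw [sum_range_pow_mul A v fun i => oneByOne (r.coeff i)]
    have h2 : (Matrix.of fun (i : Fin n) j => oneByOne (r.coeff i) 0 j) = C' * b := by
      ext i j
      fin_cases j
      simp [oneByOne, hrc]
    rw [h2, ← Matrix.mul_assoc, hc, Matrix.one_mul]
  have hLr : leftEval A v r = b := by rw [leftEval_eq_range A v r n hr0, hβ]
  -- The quotient part of `fY Y`, and the last row of `𝔠⁻¹ Y`, which is its value at `(u, B)`.
  let q : Matrix (Fin n) (Fin k) F → F[X] := fun Y => ∑ m : Fin k,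
    Polynomial.C ((C' * Y * O') (⟨n - 1, by omega⟩ : Fin n) m) * X ^ (m : ℕ)
  let y : Matrix (Fin n) (Fin k) F → Matrix (Fin 1) (Fin k) F := fun Y =>
    Matrix.of fun _ j => (C' * Y) (⟨n - 1, by omega⟩ : Fin n) j
  have hfq : ∀ Y, fY Y = r + p * q Y := hfY
  have hqc : ∀ Y i, (q Y).coeff i =
      if h : i < k then (C' * Y * O') (⟨n - 1, by omega⟩ : Fin n) ⟨i, h⟩ else 0 := fun Y i => by
    rw [← coeff_sum_X_pow_mul_C fun m => (C' * Y * O') (⟨n - 1, by omega⟩ : Fin n) m]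
    simp only [q, X_pow_mul_C]
  have hRq : ∀ Y, rightEval u B (q Y) = y Y := fun Y => by
    rw [rightEval_eq_range u B (q Y) k fun j hj => by rw [hqc, dif_neg (by omega)],
      sum_range_mul_pow]
    have h1 : (Matrix.of fun (_ : Fin 1) (i : Fin k) => (q Y).coeff i) = y Y * O' := by
      ext a i
      simp [hqc, y, Matrix.mul_apply]
    rw [h1, Matrix.mul_assoc, ho', Matrix.mul_one]
  let P : Matrix (Fin 1) (Fin k) F → ℕ → Matrix (Fin 1) (Fin k) F := fun w i =>
    oneByOne (p.coeff i) * w + oneByOne (r.coeff i) * u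
  -- A solution `Y` is reconstructed from `y Y` by the backward recursion.
  have hrec : ∀ Y, A * Y - Y * B = b * u - v * d →
      d = ∑ t ∈ Finset.range n, P (y Y) t * B ^ t + y Y * B ^ n ∧
      Y = ∑ i ∈ Finset.range n, A ^ i * v *
        (∑ t ∈ Finset.range (n - (i + 1)), P (y Y) (i + 1 + t) * B ^ t
          + y Y * B ^ (n - (i + 1))) := by
    intro Y hY
    let W : ℕ → Matrix (Fin 1) (Fin k) F := fun i =>
      Matrix.of fun _ j => if h : i < n then (C' * Y) ⟨i, h⟩ j else 0
    let U : ℕ → Matrix (Fin 1) (Fin k) F := fun i => Nat.casesOn i d W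
    have hYU : Y = ∑ i ∈ Finset.range n, A ^ i * v * U (i + 1) := by
      rw [sum_range_pow_mul A v fun i => U (i + 1)]
      have h2 : (Matrix.of fun (i : Fin n) j => U (i + 1) 0 j) = C' * Y := by
        ext i j
        simp [U, W]
      rw [h2, ← Matrix.mul_assoc, hc, Matrix.one_mul]
    have hUn : U n = y Y := by
      obtain ⟨n, rfl⟩ : ∃ n', n = n' + 1 := ⟨n - 1, by omega⟩
      ext a j
      simp [U, W, y]
    have hU := (sylvester_iff A v B u b d C' hc' p hp hpn hL _ hβ U rfl Y hYU).1 hY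
    rw [hUn] at hU
    have hh := horner B U (P (y Y)) hU
    rw [hUn] at hh
    refine ⟨?_, ?_⟩
    · have h0 := hh n 0 (by omega)
      simp only [zero_add] at h0
      exact h0
    · conv_lhs => rw [hYU]
      refine Finset.sum_congr rfl fun i hi => ?_
      rw [← hh (n - (i + 1)) (i + 1) (by have := Finset.mem_range.1 hi; omega)]
  have hdeg : ∀ Y, (fY Y).degree < ((n + k : ℕ) : WithBot ℕ) := fun Y => by
    have h1 : r.degree < ((n + k : ℕ) : WithBot ℕ) := by
      rw [degree_lt_iff_coeff_zero]
      exact fun j hj => hr0 j (by omega)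
    have h2 : (q Y).degree < (k : WithBot ℕ) := by
      rw [degree_lt_iff_coeff_zero]
      exact fun j hj => by rw [hqc, dif_neg (by omega)]
    rw [hfq]
    refine (degree_add_le _ _).trans_lt (max_lt h1 ?_)
    rcases eq_or_ne (q Y) 0 with h0 | h0
    · rw [h0, mul_zero, degree_zero]; exact WithBot.bot_lt_coe _
    · rw [← natDegree_lt_iff_degree_lt h0] at h2
      rw [← natDegree_lt_iff_degree_lt (mul_ne_zero hp.ne_zero h0),
        natDegree_mul hp.ne_zero h0]
      omega
  have h2 : ∀ Y : Matrix (Fin n) (Fin k) F, A * Y - Y * B = b * u - v * d →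
      (fY Y).degree < ((n + k : ℕ) : WithBot ℕ) ∧ leftEval A v (fY Y) = b ∧
        rightEval u B (fY Y) = d := by
    intro Y hY
    refine ⟨hdeg Y, ?_, ?_⟩
    · rw [hfq, leftEval_add, hLr, (hpI (p * q Y)).2 ⟨_, rfl⟩, add_zero]
    · rw [hfq, rightEval_add_mul B u p hp hpn r (q Y) hr0 (y Y) (hRq Y)]
      exact (hrec Y hY).1.symm
  have h3 : ∀ f : F[X], f.degree < ((n + k : ℕ) : WithBot ℕ) → leftEval A v f = b →
      rightEval u B f = d →
      ∃ Y : Matrix (Fin n) (Fin k) F, A * Y - Y * B = b * u - v * d ∧ f = fY Y := by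
    intro f hf hfb hfd
    have hLs : leftEval A v (f - r) = 0 := by
      have := leftEval_add A v (f - r) r
      rw [sub_add_cancel, hfb, hLr] at this
      exact right_eq_add.1 this
    obtain ⟨h, hh⟩ := (hpI _).1 hLs
    have hfh : f = r + p * h := by rw [← hh]; abel
    have hhk : ∀ j, k ≤ j → h.coeff j = 0 := by
      rcases eq_or_ne h 0 with h0 | h0
      · simp [h0]
      · have h1 : (p * h).degree < ((n + k : ℕ) : WithBot ℕ) := by
          rw [← hh]
          refine (degree_sub_le _ _).trans_lt (max_lt hf ?_)
          rw [degree_lt_iff_coeff_zero]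
          exact fun j hj => hr0 j (by omega)
        rw [← natDegree_lt_iff_degree_lt (mul_ne_zero hp.ne_zero h0),
          natDegree_mul hp.ne_zero h0] at h1
        exact fun j hj => coeff_eq_zero_of_natDegree_lt (by omega)
    set w := rightEval u B h with hw
    let U : ℕ → Matrix (Fin 1) (Fin k) F := fun j =>
      ∑ t ∈ Finset.range (n - j), P w (j + t) * B ^ t + w * B ^ (n - j)
    have hU0 : U 0 = d := by
      rw [← hfd, hfh, rightEval_add_mul B u p hp hpn r h hr0 w rfl]
      simp [U, P]
    have hUn : U n = w := by simp [U]
    refine ⟨∑ i ∈ Finset.range n, A ^ i * v * U (i + 1), ?_, ?_⟩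
    · refine (sylvester_iff A v B u b d C' hc' p hp hpn hL _ hβ U hU0 _ rfl).2 fun i hi => ?_
      rw [hUn]
      have hs : n - i = (n - (i + 1)) + 1 := by omega
      have ht : ∀ t, P w (i + (t + 1)) = P w (i + 1 + t) := fun t => by congr 1; omega
      simp only [U]
      rw [hs, Finset.sum_range_succ', Matrix.add_mul _ _ B, Matrix.sum_mul]
      simp only [pow_succ, pow_zero, Matrix.mul_one, Matrix.mul_assoc, add_zero, ht]
      simp only [P]
      abel
    · rw [hfq, hfh]
      congr 2
      ext i
      rw [hqc, sum_range_pow_mul A v fun i => U (i + 1), ← Matrix.mul_assoc, hc', Matrix.one_mul]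
      split_ifs with hi
      · have h4 : w * O' = Matrix.of fun (_ : Fin 1) (i : Fin k) => h.coeff i := by
          rw [hw, rightEval_eq_range u B h k hhk, sum_range_mul_pow, Matrix.mul_assoc, ho,
            Matrix.mul_one]
        have h5 := congrFun (congrFun h4 0) ⟨i, hi⟩
        rw [Matrix.of_apply] at h5
        rw [← h5, Matrix.mul_apply, Matrix.mul_apply]
        refine Finset.sum_congr rfl fun j _ => ?_
        rw [Matrix.of_apply, ← hUn]
        simp only [Nat.sub_add_cancel hn]
      · exact hhk i (by omega)
  refine ⟨⟨?_, ?_⟩, h2, ?_, h3⟩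
  · rintro ⟨f, hf, hfb, hfd⟩
    obtain ⟨Y, hY, -⟩ := h3 f hf hfb hfd
    exact ⟨Y, hY⟩
  · rintro ⟨Y, hY⟩
    exact ⟨fY Y, h2 Y hY⟩
  · intro Y Y' hY hY' hff
    rw [hfq, hfq] at hff
    have hq : q Y = q Y' := mul_left_cancel₀ hp.ne_zero (add_left_cancel hff)
    have hy : y Y = y Y' := by rw [← hRq, ← hRq, hq]
    rw [(hrec Y hY).2, (hrec Y' hY').2, hy]
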